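/- There exists a constant C > 0, depending only on Ω, μ, δ₀, κ⁺ and κ⁻ (in particular independent of δ ∈ (0, δ₀)), with the following property: if u : cl(Ω) → ℝ is Lipschitz on Ω, continuous on cl(Ω) with u = φ on ∂Ω, and satisfies div(a∇u) = 0 weakly, i.e. ∫_Ω a(x) ⟨∇u(x), ∇ψ(x)⟩ dx = 0 for every smooth function ψ : ℝ² → ℝ with compact support contained in Ω (where ∇u denotes the almost-everywhere defined gradient of the Lipschitz function u), then ess sup_{x ∈ Ω^μ} |∇u(x)| ≤ C ‖φ‖_{L∞(∂Ω)}. -/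

import Mathlib

open Set MeasureTheory

/-- Partial derivative in direction `i` of a function on `ℝ²`. -/
noncomputable def pd (i : Fin 2) (f : EuclideanSpace ℝ (Fin 2) → ℝ)
    (x : EuclideanSpace ℝ (Fin 2)) : ℝ :=
  fderiv ℝ f x (EuclideanSpace.single i 1)

/-- The center `(0, -2-2δ)` of the lower disk `B⁻`. -/
noncomputable def ctr (δ : ℝ) : EuclideanSpace ℝ (Fin 2) :=
  (WithLp.equiv 2 (Fin 2 → ℝ)).symm ![0, -2 - 2 * δ]

/-- The upper unit disk `B⁺`, centered at the origin. -/
noncomputable def Bp : Set (EuclideanSpace ℝ (Fin 2)) := Metric.ball 0 1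

/-- The lower unit disk `B⁻`, centered at `(0, -2-2δ)`. -/
noncomputable def Bm (δ : ℝ) : Set (EuclideanSpace ℝ (Fin 2)) := Metric.ball (ctr δ) 1

open Classical in
/-- The conductivity: `κ⁺` on `B⁺`, `κ⁻` on `B⁻`, and `1` elsewhere. -/
noncomputable def aFun (δ κp κm : ℝ) (x : EuclideanSpace ℝ (Fin 2)) : ℝ :=
  if x ∈ Bp then κp else if x ∈ Bm δ then κm else 1

/-- `Ω^σ = {x ∈ Ω : dist(x, ∂Ω) ≥ σ}`. -/
noncomputable def innerReg (Ω : Set (EuclideanSpace ℝ (Fin 2))) (σ : ℝ) :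
    Set (EuclideanSpace ℝ (Fin 2)) :=
  {x ∈ Ω | σ ≤ Metric.infDist x (frontier Ω)}

/-- `Ω` has smooth boundary: it is the sublevel set of a smooth function with
nonvanishing gradient on the boundary. -/
def SmoothBoundary (Ω : Set (EuclideanSpace ℝ (Fin 2))) : Prop :=
  ∃ f : EuclideanSpace ℝ (Fin 2) → ℝ, ContDiff ℝ (⊤ : ℕ∞) f ∧ Ω = {x | f x < 0} ∧
    ∀ x ∈ frontier Ω, fderiv ℝ f x ≠ 0

/-- `‖φ‖_{L^∞(∂Ω)}`. -/
noncomputable def bdryNorm (Ω : Set (EuclideanSpace ℝ (Fin 2))) (φ : EuclideanSpace ℝ (Fin 2) → ℝ) : ℝ :=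
  sSup ((fun y => |φ y|) '' frontier Ω)


open Filter Topology

abbrev E2 := EuclideanSpace ℝ (Fin 2)

/-- The Euclidean pairing of two linear forms. -/
noncomputable def br (L M : E2 →L[ℝ] ℝ) : ℝ :=
  ∑ i : Fin 2, L (EuclideanSpace.single i 1) * M (EuclideanSpace.single i 1)

lemma br_add_left (L L' M : E2 →L[ℝ] ℝ) : br (L + L') M = br L M + br L' M := by
  simp [br, Fin.sum_univ_two]; ring

lemma br_smul_left (c : ℝ) (L M : E2 →L[ℝ] ℝ) : br (c • L) M = c * br L M := by
  simp [br, Fin.sum_univ_two]; ring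

lemma br_sub_right (L M M' : E2 →L[ℝ] ℝ) : br L (M - M') = br L M - br L M' := by
  simp [br, Fin.sum_univ_two]; ring

lemma br_zero_right (L : E2 →L[ℝ] ℝ) : br L 0 = 0 := by simp [br]

lemma abs_br_le (L M : E2 →L[ℝ] ℝ) : |br L M| ≤ 2 * ‖L‖ * ‖M‖ := by
  have h : ∀ (L : E2 →L[ℝ] ℝ) (i : Fin 2), |L (EuclideanSpace.single i 1)| ≤ ‖L‖ := by
    intro L i
    simpa using L.le_opNorm (EuclideanSpace.single i 1)
  unfold br
  rw [Fin.sum_univ_two]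
  have h0 := mul_le_mul (h L 0) (h M 0) (abs_nonneg _) (norm_nonneg _)
  have h1 := mul_le_mul (h L 1) (h M 1) (abs_nonneg _) (norm_nonneg _)
  rw [← abs_mul] at h0 h1
  linarith [abs_add_le (L (EuclideanSpace.single 0 1) * M (EuclideanSpace.single 0 1))
    (L (EuclideanSpace.single 1 1) * M (EuclideanSpace.single 1 1))]

lemma vec_decomp (v : E2) : v = v 0 • (EuclideanSpace.single 0 1 : E2) + v 1 • (EuclideanSpace.single 1 1 : E2) := by
  ext i; fin_cases i <;> simp

lemma br_self_nonneg (L : E2 →L[ℝ] ℝ) : 0 ≤ br L L := by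
  unfold br; exact Finset.sum_nonneg fun i _ => mul_self_nonneg _

lemma br_self_eq_zero {L : E2 →L[ℝ] ℝ} (h : br L L = 0) : L = 0 := by
  unfold br at h
  rw [Fin.sum_univ_two] at h
  have h0 : L (EuclideanSpace.single 0 1) = 0 := by nlinarith [mul_self_nonneg (L (EuclideanSpace.single 0 1)), mul_self_nonneg (L (EuclideanSpace.single 1 1))]
  have h1 : L (EuclideanSpace.single 1 1) = 0 := by nlinarith [mul_self_nonneg (L (EuclideanSpace.single 0 1)), mul_self_nonneg (L (EuclideanSpace.single 1 1))]
  ext v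
  rw [vec_decomp v]
  simp [h0, h1]

lemma br_innerSL (L : E2 →L[ℝ] ℝ) (v : E2) : br L (innerSL ℝ v) = L v := by
  conv_rhs => rw [vec_decomp v]
  simp [br, Fin.sum_univ_two, EuclideanSpace.inner_single_right]; ring

lemma br_eq_inner (L M : E2 →L[ℝ] ℝ) : br L M =
    inner ℝ ((InnerProductSpace.toDual ℝ E2).symm L) ((InnerProductSpace.toDual ℝ E2).symm M) := by
  have h : M = innerSL ℝ ((InnerProductSpace.toDual ℝ E2).symm M) := by
    ext v; simp
  conv_lhs => rw [h]
  rw [br_innerSL, InnerProductSpace.toDual_symm_apply]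

lemma br_comp_isom (k : ℝ) (Q : E2 ≃ₗᵢ[ℝ] E2) (L M : E2 →L[ℝ] ℝ) :
    br (L.comp (k • (Q : E2 →L[ℝ] E2))) (M.comp (k • (Q : E2 →L[ℝ] E2))) = k ^ 2 * br L M := by
  have h : ∀ L : E2 →L[ℝ] ℝ, (InnerProductSpace.toDual ℝ E2).symm (L.comp (k • (Q : E2 →L[ℝ] E2)))
      = k • Q.symm ((InnerProductSpace.toDual ℝ E2).symm L) := by
    intro L
    apply ext_inner_right ℝ
    intro v
    rw [InnerProductSpace.toDual_symm_apply, inner_smul_left]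
    rw [← Q.inner_map_map, Q.apply_symm_apply, InnerProductSpace.toDual_symm_apply]
    simp
  rw [br_eq_inner, h, h, inner_smul_left, inner_smul_right, Q.symm.inner_map_map, ← br_eq_inner]
  simp; ring

lemma meets_frontier {s A : Set E2} (hs : IsPreconnected s) (h1 : (s ∩ A).Nonempty)
    (h2 : (s ∩ Aᶜ).Nonempty) : (s ∩ frontier A).Nonempty := by
  by_contra h
  have hno : ∀ x ∈ s, x ∉ frontier A := fun x hx hf => h ⟨x, hx, hf⟩
  have hcov : s ⊆ interior A ∪ (closure A)ᶜ := by
    intro x hx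
    by_cases hc : x ∈ closure A
    · left
      by_contra hi
      exact hno x hx ⟨hc, hi⟩
    · right; exact hc
  obtain ⟨x, hxs, hxA⟩ := h1
  obtain ⟨y, hys, hyA⟩ := h2
  obtain ⟨z, _, hz1, hz2⟩ := hs (interior A) (closure A)ᶜ isOpen_interior isClosed_closure.isOpen_compl hcov
    ⟨x, hxs, (hcov hxs).resolve_right fun h => h (subset_closure hxA)⟩
    ⟨y, hys, (hcov hys).resolve_left fun h => hyA (interior_subset h)⟩
  exact hz2 (subset_closure (interior_subset hz1))

lemma glue {A : Set E2} (hA : IsClosed A) {f : E2 → ℝ} {K : NNReal} (hf : LipschitzOnWith K f A)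
    (h0 : ∀ x ∉ A, f x = 0) (h1 : ∀ x ∈ frontier A, f x = 0) : LipschitzWith K f := by
  have key : ∀ x ∈ A, ∀ y ∉ A, |f x| ≤ K * dist x y := by
    intro x hx y hy
    have hpre : IsPreconnected (segment ℝ x y) := (convex_segment x y).isPreconnected
    obtain ⟨z, hz, hzA⟩ := meets_frontier hpre
      (⟨x, left_mem_segment ℝ x y, hx⟩ : (segment ℝ x y ∩ A).Nonempty)
      (⟨y, right_mem_segment ℝ x y, hy⟩ : (segment ℝ x y ∩ Aᶜ).Nonempty)
    have h2 := hf.dist_le_mul x hx z (hA.frontier_subset hzA)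
    rw [h1 z hzA, Real.dist_eq, sub_zero] at h2
    have h3 : dist x z ≤ dist x y := by
      have := dist_add_dist_of_mem_segment hz
      linarith [dist_nonneg (x := z) (y := y)]
    exact h2.trans (mul_le_mul_of_nonneg_left h3 K.2)
  apply LipschitzWith.of_dist_le_mul
  intro x y
  by_cases hx : x ∈ A <;> by_cases hy : y ∈ A
  · exact hf.dist_le_mul x hx y hy
  · rw [Real.dist_eq, h0 y hy, sub_zero]; exact key x hx y hy
  · rw [Real.dist_eq, h0 x hx, zero_sub, abs_neg, dist_comm]; exact key y hy x hx
  · rw [h0 x hx, h0 y hy]; simp; positivity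

lemma meas_br (u ψ : E2 → ℝ) : Measurable (fun x => br (fderiv ℝ u x) (fderiv ℝ ψ x)) := by
  unfold br
  exact Finset.measurable_sum _ fun i _ =>
    (measurable_fderiv_apply_const ℝ u _).mul (measurable_fderiv_apply_const ℝ ψ _)

lemma fderiv_zero_off {ψ : E2 → ℝ} {x : E2} (hx : x ∉ tsupport ψ) : fderiv ℝ ψ x = 0 := by
  by_contra h
  exact hx (support_fderiv_subset ℝ (f := ψ) h)

lemma integrable_br {u ψ : E2 → ℝ} {K C : NNReal} (hu : LipschitzWith K u) (hψ : LipschitzWith C ψ)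
    (hc : HasCompactSupport ψ) :
    Integrable (fun x => br (fderiv ℝ u x) (fderiv ℝ ψ x)) := by
  have h1 : IntegrableOn (fun x => br (fderiv ℝ u x) (fderiv ℝ ψ x)) (tsupport ψ) := by
    apply Measure.integrableOn_of_bounded (M := 2 * K * C) hc.measure_lt_top.ne
      (meas_br u ψ).aestronglyMeasurable
    refine ae_of_all _ fun x => ?_
    rw [Real.norm_eq_abs]
    refine (abs_br_le _ _).trans ?_
    gcongr
    · exact norm_fderiv_le_of_lipschitz ℝ hu
    · exact norm_fderiv_le_of_lipschitz ℝ hψ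
  rw [integrableOn_iff_integrable_of_support_subset] at h1
  · exact h1
  · intro x hx
    by_contra h
    apply hx
    simp [fderiv_zero_off h, br_zero_right]


lemma fderiv_mollify {η θ : E2 → ℝ} {C : NNReal} (hη : Continuous η) (hηc : HasCompactSupport η)
    (hθ : LipschitzWith C θ) (x : E2) :
    Integrable (fun t => η t • fderiv ℝ θ (x - t)) ∧
    HasFDerivAt (fun x => ∫ t, η t * θ (x - t)) (∫ t, η t • fderiv ℝ θ (x - t)) x := by
  have hηi : Integrable η := hη.integrable_of_hasCompactSupport hηc
  apply hasFDerivAt_integral_of_dominated_loc_of_lip (s := univ) (bound := fun t => C * ‖η t‖) univ_mem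
  · exact Eventually.of_forall fun y =>
      (hη.mul (hθ.continuous.comp (continuous_const.sub continuous_id))).aestronglyMeasurable
  · exact (hη.mul (hθ.continuous.comp (continuous_const.sub continuous_id))).integrable_of_hasCompactSupport
      hηc.mul_right
  · exact hη.aestronglyMeasurable.smul
      ((measurable_fderiv ℝ θ).comp (measurable_const.sub measurable_id)).aestronglyMeasurable
  · refine ae_of_all _ fun t => LipschitzOnWith.of_dist_le_mul fun a _ b _ => ?_
    have := hθ.dist_le_mul (a - t) (b - t)
    rw [dist_sub_right] at this
    rw [Real.dist_eq, ← mul_sub, abs_mul]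
    rw [Real.dist_eq] at this
    simp only [Real.coe_nnabs, Real.norm_eq_abs]
    rw [abs_of_nonneg (by positivity : 0 ≤ (C:ℝ) * |η t|)]
    nlinarith [abs_nonneg (η t)]
  · exact hηi.norm.const_mul _
  · have h1 : ∀ᵐ y : E2, DifferentiableAt ℝ θ y := hθ.ae_differentiableAt
    have h2 : ∀ᵐ t : E2, DifferentiableAt ℝ θ (x - t) :=
      (MeasureTheory.Measure.measurePreserving_sub_left (volume : Measure E2) x).quasiMeasurePreserving.ae h1
    filter_upwards [h2] with t ht
    have : HasFDerivAt (fun y => θ (y - t)) (fderiv ℝ θ (x - t)) x := by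
      exact (hasFDerivAt_comp_sub t).2 ht.hasFDerivAt
    exact this.const_mul (η t)

lemma weak_lip {Ω : Set E2} (hΩo : IsOpen Ω) (hΩb : Bornology.IsBounded Ω) {a u : E2 → ℝ}
    (ha : Measurable a) {Ca : ℝ} (hCa : ∀ x, |a x| ≤ Ca) {K : NNReal} (hu : LipschitzWith K u)
    (hw : ∀ ψ : E2 → ℝ, ContDiff ℝ (⊤ : ℕ∞) ψ → HasCompactSupport ψ → tsupport ψ ⊆ Ω →
      ∫ x in Ω, a x * br (fderiv ℝ u x) (fderiv ℝ ψ x) = 0)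
    {θ : E2 → ℝ} {C : NNReal} (hθ : LipschitzWith C θ) (hc : HasCompactSupport θ)
    (hs : tsupport θ ⊆ Ω) : ∫ x, a x * br (fderiv ℝ u x) (fderiv ℝ θ x) = 0 := by
  obtain ⟨d, hd, hdΩ⟩ := IsCompact.exists_cthickening_subset_open hc hΩo hs
  let φ : ℕ → ContDiffBump (0 : E2) := fun n =>
    ⟨d / (2 * (n + 1)), d / (n + 1), by positivity, by
      apply div_lt_div_of_pos_left hd (by positivity); linarith⟩
  have hrout : ∀ n, (φ n).rOut = d / (n + 1) := fun n => rfl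
  have hrin : ∀ n, (φ n).rIn = d / (2 * (n + 1)) := fun n => rfl
  let θn : ℕ → E2 → ℝ := fun n => convolution ((φ n).normed volume) θ (ContinuousLinearMap.lsmul ℝ ℝ) volume
  have hθn : ∀ n x, θn n x = ∫ t, (φ n).normed volume t * θ (x - t) := by
    intro n x; simp [θn, convolution_def]
  have hsupp : ∀ n, tsupport (θn n) ⊆ Metric.cthickening d (tsupport θ) := by
    intro n
    apply closure_minimal _ Metric.isClosed_cthickening
    refine (support_convolution_subset _).trans ?_
    rintro _ ⟨p, hp, q, hq, rfl⟩
    rw [(φ n).support_normed_eq] at hp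
    apply Metric.mem_cthickening_of_dist_le _ q _ _ (subset_tsupport _ hq)
    simp only [Metric.mem_ball, dist_zero_right] at hp
    rw [hrout] at hp
    rw [dist_eq_norm]
    simp only [add_sub_cancel_right]
    refine hp.le.trans ?_
    apply div_le_self hd.le; linarith [(Nat.cast_nonneg n : (0:ℝ) ≤ n)]
  have hcomp : ∀ n, HasCompactSupport (θn n) := fun n =>
    (IsCompact.cthickening (r := d) hc).of_isClosed_subset (isClosed_tsupport _) (hsupp n)
  have hsm : ∀ n, ContDiff ℝ (⊤ : ℕ∞) (θn n) := fun n =>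
    (φ n).hasCompactSupport_normed.contDiff_convolution_left _ (φ n).contDiff_normed
      hθ.continuous.locallyIntegrable
  have hzero : ∀ n, ∫ x in Ω, a x * br (fderiv ℝ u x) (fderiv ℝ (θn n) x) = 0 := fun n =>
    hw _ (hsm n) (hcomp n) ((hsupp n).trans hdΩ)
  have hfd : ∀ n x, Integrable (fun t => (φ n).normed volume t • fderiv ℝ θ (x - t)) ∧
      fderiv ℝ (θn n) x = ∫ t, (φ n).normed volume t • fderiv ℝ θ (x - t) := by
    intro n x
    have h := fderiv_mollify ((φ n).continuous_normed (μ := volume)) ((φ n).hasCompactSupport_normed) hθ x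
    refine ⟨h.1, ?_⟩
    have h2 : θn n = fun x => ∫ t, (φ n).normed volume t * θ (x - t) := funext (hθn n)
    rw [h2]
    exact h.2.fderiv
  have hbd : ∀ n x, ‖fderiv ℝ (θn n) x‖ ≤ C := by
    intro n x
    rw [(hfd n x).2]
    calc _ ≤ ∫ t, (φ n).normed volume t * C := by
          apply norm_integral_le_of_norm_le
          · exact ((φ n).integrable_normed).mul_const _
          · refine ae_of_all _ fun t => ?_
            rw [norm_smul, Real.norm_eq_abs, abs_of_nonneg ((φ n).nonneg_normed t)]
            exact mul_le_mul_of_nonneg_left (norm_fderiv_le_of_lipschitz ℝ hθ) ((φ n).nonneg_normed t)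
      _ = C := by rw [integral_mul_const, (φ n).integral_normed, one_mul]
  have hto : Tendsto (fun n => (φ n).rOut) atTop (𝓝 0) := by
    simp only [hrout]
    have := (tendsto_one_div_add_atTop_nhds_zero_nat (𝕜 := ℝ)).const_mul d
    simpa [div_eq_mul_inv] using this
  have hconv : ∀ i : Fin 2, ∀ᵐ x : E2, Tendsto (fun n => fderiv ℝ (θn n) x (EuclideanSpace.single i 1)) atTop
      (𝓝 (fderiv ℝ θ x (EuclideanSpace.single i 1))) := by
    intro i
    have hloc : LocallyIntegrable (fun x => fderiv ℝ θ x (EuclideanSpace.single i 1)) volume := by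
      apply (locallyIntegrable_const (C : ℝ)).mono (measurable_fderiv_apply_const ℝ θ _).aestronglyMeasurable
      refine ae_of_all _ fun x => ?_
      have := (fderiv ℝ θ x).le_opNorm (EuclideanSpace.single i 1)
      have h2 := norm_fderiv_le_of_lipschitz ℝ hθ (x₀ := x)
      simp at this ⊢
      linarith
    filter_upwards [ContDiffBump.ae_convolution_tendsto_right_of_locallyIntegrable (φ := φ) (K := 2) hto
      (Eventually.of_forall fun n => by rw [hrout, hrin]; apply le_of_eq; field_simp) hloc] with x hx
    refine hx.congr fun n => ?_
    rw [(hfd n x).2, ContinuousLinearMap.integral_apply (hfd n x).1]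
    simp [convolution_def]
  have hae : ∀ᵐ x : E2, ∀ i : Fin 2, Tendsto (fun n => fderiv ℝ (θn n) x (EuclideanSpace.single i 1)) atTop
      (𝓝 (fderiv ℝ θ x (EuclideanSpace.single i 1))) := ae_all_iff.2 hconv
  have hlim : Tendsto (fun n => ∫ x in Ω, a x * br (fderiv ℝ u x) (fderiv ℝ (θn n) x)) atTop
      (𝓝 (∫ x in Ω, a x * br (fderiv ℝ u x) (fderiv ℝ θ x))) := by
    have : IsFiniteMeasure (volume.restrict Ω) := ⟨by simpa using hΩb.measure_lt_top⟩
    apply tendsto_integral_of_dominated_convergence (fun _ => Ca * (2 * K * C))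
    · exact fun n => (ha.mul (meas_br u _)).aestronglyMeasurable
    · exact integrable_const _
    · intro n
      refine ae_of_all _ fun x => ?_
      rw [norm_mul, Real.norm_eq_abs, Real.norm_eq_abs]
      have h1 := abs_br_le (fderiv ℝ u x) (fderiv ℝ (θn n) x)
      have h2 : 2 * ‖fderiv ℝ u x‖ * ‖fderiv ℝ (θn n) x‖ ≤ 2 * K * C := by
        gcongr
        · exact norm_fderiv_le_of_lipschitz ℝ hu
        · exact hbd n x
      exact mul_le_mul (hCa x) (h1.trans h2) (abs_nonneg _) ((abs_nonneg _).trans (hCa x))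
    · apply ae_restrict_of_ae
      filter_upwards [hae] with x hx
      apply Tendsto.const_mul
      unfold br
      exact tendsto_finsetSum _ fun i _ => (hx i).const_mul _
  have hfin : ∫ x in Ω, a x * br (fderiv ℝ u x) (fderiv ℝ θ x) = 0 := by
    simp only [hzero] at hlim
    exact tendsto_nhds_unique hlim tendsto_const_nhds
  rw [← hfin, setIntegral_eq_integral_of_forall_compl_eq_zero]
  intro x hx
  rw [fderiv_zero_off (fun h => hx (hs h)), br_zero_right, mul_zero]


open Classical in
lemma max_principle {Ω : Set E2} (hΩo : IsOpen Ω) (hΩb : Bornology.IsBounded Ω) {a u : E2 → ℝ}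
    (ha : Measurable a) {Ca : ℝ} (hCa : ∀ x, |a x| ≤ Ca) (hpos : ∀ x, 0 < a x)
    {K : NNReal} (hu : LipschitzWith K u)
    (hw : ∀ (θ : E2 → ℝ) (C : NNReal), LipschitzWith C θ → HasCompactSupport θ → tsupport θ ⊆ Ω →
      ∫ x, a x * br (fderiv ℝ u x) (fderiv ℝ θ x) = 0)
    {M : ℝ} (hM : ∀ x ∈ frontier Ω, u x ≤ M) : ∀ x ∈ Ω, u x ≤ M := by
  intro x hx
  apply le_of_forall_pos_le_add
  intro ε hε
  set c := M + ε with hcdef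
  let θ : E2 → ℝ := fun x => if x ∈ closure Ω then max (u x - c) 0 else 0
  have hθin : ∀ y ∈ closure Ω, θ y = max (u y - c) 0 := fun y hy => if_pos hy
  have hθout : ∀ y ∉ closure Ω, θ y = 0 := fun y hy => if_neg hy
  have hθ0 : ∀ y, 0 ≤ θ y := by
    intro y
    by_cases hy : y ∈ closure Ω
    · rw [hθin y hy]; exact le_max_right _ _
    · rw [hθout y hy]
  have hmax : LipschitzWith K (fun y => max (u y - c) 0) := by
    have h1 : LipschitzWith K (fun y => u y - c) := by
      apply LipschitzWith.of_dist_le_mul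
      intro p q
      rw [dist_sub_right]
      exact hu.dist_le_mul p q
    exact h1.max_const 0
  have hθL : LipschitzWith K θ := by
    apply glue (isClosed_closure (s := Ω))
    · intro p hp q hq
      rw [hθin p hp, hθin q hq]
      exact hmax p q
    · exact hθout
    · intro y hy
      have hy' : y ∈ frontier Ω := frontier_closure_subset hy
      rw [hθin y (frontier_subset_closure hy')]
      apply max_eq_right
      linarith [hM y hy']
  have hts : tsupport θ ⊆ closure Ω ∩ {y | c ≤ u y} := by
    apply closure_minimal _ (isClosed_closure.inter (isClosed_le continuous_const hu.continuous))
    intro y hy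
    by_cases hyc : y ∈ closure Ω
    · refine ⟨hyc, ?_⟩
      by_contra hlt
      apply hy
      rw [hθin y hyc]
      apply max_eq_right
      simp only [mem_ofPred_eq, not_le] at hlt
      linarith
    · exact absurd (hθout y hyc) hy
  have htsΩ : tsupport θ ⊆ Ω := by
    intro y hy
    obtain ⟨h1, h2⟩ := hts hy
    by_contra hyΩ
    have : y ∈ frontier Ω := ⟨h1, by rwa [hΩo.interior_eq]⟩
    have := hM y this
    simp only [mem_ofPred_eq] at h2
    linarith
  have hcs : HasCompactSupport θ :=
    hΩb.isCompact_closure.of_isClosed_subset (isClosed_tsupport _) (htsΩ.trans subset_closure)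
  have hI := hw θ K hθL hcs htsΩ
  have hfd : ∀ y, br (fderiv ℝ u y) (fderiv ℝ θ y) = br (fderiv ℝ θ y) (fderiv ℝ θ y) := by
    intro y
    by_cases hy : y ∈ Ω ∧ c < u y
    · have hev : θ =ᶠ[𝓝 y] fun z => u z - c := by
        filter_upwards [hΩo.mem_nhds hy.1, (isOpen_lt continuous_const hu.continuous).mem_nhds hy.2] with z hz1 hz2
        rw [hθin z (subset_closure hz1)]
        apply max_eq_left
        have hz3 : c < u z := hz2
        linarith
      rw [hev.fderiv_eq, fderiv_sub_const]
    · have h0 : θ y = 0 := by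
        by_cases hyc : y ∈ closure Ω
        · rw [hθin y hyc]
          apply max_eq_right
          by_cases hyΩ : y ∈ Ω
          · have : ¬ c < u y := fun h => hy ⟨hyΩ, h⟩
            linarith [not_lt.1 this]
          · have : y ∈ frontier Ω := ⟨hyc, by rwa [hΩo.interior_eq]⟩
            linarith [hM y this]
        · exact hθout y hyc
      have : IsLocalMin θ y := Eventually.of_forall fun z => by rw [h0]; exact hθ0 z
      rw [this.fderiv_eq_zero, br_zero_right, br_zero_right]
  simp only [hfd] at hI
  have hinteg : Integrable (fun y => a y * br (fderiv ℝ θ y) (fderiv ℝ θ y)) :=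
    (integrable_br hθL hθL hcs).bdd_mul ha.aestronglyMeasurable (ae_of_all _ fun y => by
      rw [Real.norm_eq_abs]; exact hCa y)
  rw [integral_eq_zero_iff_of_nonneg (fun y => mul_nonneg (hpos y).le (br_self_nonneg _)) hinteg] at hI
  have hD0 : ∀ᵐ y : E2, fderiv ℝ θ y = 0 := by
    filter_upwards [hI] with y hy
    have hy' : a y * br (fderiv ℝ θ y) (fderiv ℝ θ y) = 0 := hy
    exact br_self_eq_zero ((mul_eq_zero.1 hy').resolve_left (hpos y).ne')
  let e : E2 →L[ℝ] ℝ := EuclideanSpace.proj 0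
  have hparts := LipschitzWith.integral_lineDeriv_mul_eq (μ := (volume : Measure E2)) e.lipschitz hθL hcs
    (EuclideanSpace.single 0 1)
  have hle : ∀ y, lineDeriv ℝ e y (EuclideanSpace.single 0 1) = 1 := by
    intro y
    rw [e.differentiableAt.lineDeriv_eq_fderiv, e.fderiv]
    simp [e]
  simp only [hle, one_mul] at hparts
  have hz : ∫ y, lineDeriv ℝ θ y (-EuclideanSpace.single 0 1) * e y = 0 := by
    apply integral_eq_zero_of_ae
    filter_upwards [hD0, hθL.ae_differentiableAt] with y h1 h2
    rw [h2.lineDeriv_eq_fderiv, h1]; simp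
  rw [hz, integral_eq_zero_iff_of_nonneg hθ0
    (hθL.continuous.integrable_of_hasCompactSupport hcs)] at hparts
  have hzero : θ = 0 := (hθL.continuous.ae_eq_iff_eq (μ := volume) continuous_const).1 hparts
  have h1 := congrFun hzero x
  rw [hθin x (subset_closure hx)] at h1
  have h2 := le_max_left (u x - c) 0
  rw [h1] at h2
  simp only [Pi.zero_apply] at h2
  linarith


/-- A radial Lipschitz bump. -/
noncomputable def bump (z : E2) : ℝ := max (1 - ‖z‖ ^ 2) 0

lemma bump_nonneg (z : E2) : 0 ≤ bump z := le_max_right _ _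

lemma bump_le_one (z : E2) : bump z ≤ 1 := by
  unfold bump; apply max_le _ zero_le_one; nlinarith [sq_nonneg ‖z‖]

lemma bump_out {z : E2} (hz : z ∉ Metric.ball (0 : E2) 1) : bump z = 0 := by
  simp only [Metric.mem_ball, dist_zero_right, not_lt] at hz
  apply max_eq_right; nlinarith

lemma bump_lip : LipschitzWith 2 bump := by
  apply glue (Metric.isClosed_closedBall (x := (0 : E2)) (ε := 1))
  · apply LipschitzOnWith.of_dist_le_mul
    intro x hx y hy
    simp only [Metric.mem_closedBall, dist_zero_right] at hx hy
    unfold bump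
    rw [max_eq_left (by nlinarith [norm_nonneg x]), max_eq_left (by nlinarith [norm_nonneg y]), Real.dist_eq,
      dist_eq_norm]
    have h1 := abs_norm_sub_norm_le x y
    have : (1 - ‖x‖ ^ 2) - (1 - ‖y‖ ^ 2) = -((‖x‖ - ‖y‖) * (‖x‖ + ‖y‖)) := by ring
    rw [this, abs_neg, abs_mul, abs_of_nonneg (by positivity : 0 ≤ ‖x‖ + ‖y‖)]
    simp only [NNReal.coe_ofNat]
    nlinarith [norm_nonneg x, norm_nonneg y, abs_nonneg (‖x‖ - ‖y‖)]
  · intro x hx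
    exact bump_out fun h => hx (Metric.ball_subset_closedBall h)
  · intro x hx
    apply bump_out
    rw [frontier_closedBall (0:E2) one_ne_zero] at hx
    simp at hx ⊢
    rw [hx]

lemma bump_cont : Continuous bump := bump_lip.continuous

lemma bump_supp : Function.support bump ⊆ Metric.ball (0 : E2) 1 := by
  intro z hz
  by_contra h
  exact hz (bump_out h)

lemma bump_tsupp : tsupport bump ⊆ Metric.closedBall (0 : E2) 1 :=
  closure_minimal (bump_supp.trans Metric.ball_subset_closedBall) Metric.isClosed_closedBall

lemma bump_cs : HasCompactSupport bump :=
  (isCompact_closedBall (0 : E2) 1).of_isClosed_subset (isClosed_tsupport _) bump_tsupp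

lemma bump_int_pos : 0 < ∫ z, bump z := by
  apply bump_cont.integral_pos_of_hasCompactSupport_nonneg_nonzero bump_cs bump_nonneg (x := 0)
  simp [bump]

lemma hasDerivAt_posSq (s : ℝ) : HasDerivAt (fun s : ℝ => (max s 0) ^ 2) (2 * max s 0) s := by
  rcases lt_trichotomy s 0 with h | h | h
  · rw [max_eq_right h.le, mul_zero]
    apply (hasDerivAt_const s (0:ℝ)).congr_of_eventuallyEq
    filter_upwards [gt_mem_nhds h] with t ht
    rw [max_eq_right ht.le]; simp
  · subst h
    simp only [max_self, mul_zero]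
    have : HasFDerivAt (fun s : ℝ => (max s 0) ^ 2) (0 : ℝ →L[ℝ] ℝ) 0 := by
      apply Asymptotics.IsBigO.hasFDerivAt (n := 2) _ (by norm_num)
      apply Asymptotics.IsBigO.of_bound 1
      refine Eventually.of_forall fun t => ?_
      simp only [sub_zero, one_mul, norm_pow, norm_norm]
      gcongr
      rw [Real.norm_eq_abs, Real.norm_eq_abs, abs_of_nonneg (le_max_right _ _)]
      exact max_le (le_abs_self t) (abs_nonneg t)
    simpa using this.hasDerivAt
  · rw [max_eq_left h.le]
    have h1 : HasDerivAt (fun t : ℝ => t ^ 2) (2 * s) s := by simpa using hasDerivAt_pow 2 s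
    apply h1.congr_of_eventuallyEq
    filter_upwards [lt_mem_nhds h] with t ht
    rw [max_eq_left ht.le]

/-- The test function used for the mean value property. -/
noncomputable def testΨ (x : E2) (r : ℝ) (y : E2) : ℝ := bump ((1 / r) • (y - x)) ^ 2

lemma testΨ_fderiv (x : E2) {r : ℝ} (y : E2) :
    fderiv ℝ (testΨ x r) y = (-(4 / r ^ 2) * bump ((1 / r) • (y - x))) • innerSL ℝ (y - x) := by
  have hf : testΨ x r = fun y => (max (1 - (1 / r) ^ 2 * ‖y - x‖ ^ 2) 0) ^ 2 := by
    funext z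
    simp only [testΨ, bump, norm_smul, mul_pow, Real.norm_eq_abs, sq_abs]
  have h1 : HasFDerivAt (fun y : E2 => ‖y - x‖ ^ 2) (2 • innerSL ℝ (y - x)) y := by
    have := (hasStrictFDerivAt_norm_sq (y - x)).hasFDerivAt
    exact (hasFDerivAt_comp_sub (f := fun z : E2 => ‖z‖ ^ 2) x).2 this
  have h2 := ((h1.const_mul ((1 / r) ^ 2)).const_sub 1)
  have h3 := (hasDerivAt_posSq (1 - (1 / r) ^ 2 * ‖y - x‖ ^ 2)).comp_hasFDerivAt y h2
  rw [hf]
  have h4 := h3.fderiv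
  rw [Function.comp_def] at h4
  rw [h4]
  ext v
  simp only [bump, norm_smul, mul_pow, Real.norm_eq_abs, sq_abs]
  simp
  ring

lemma bump_scale_lip (x : E2) {r : ℝ} (hr : 0 < r) (y y' : E2) (x' : E2) :
    |bump ((1 / r) • (y - x)) - bump ((1 / r) • (y' - x'))| ≤ 2 / r * ‖(y - x) - (y' - x')‖ := by
  have := bump_lip.dist_le_mul ((1 / r) • (y - x)) ((1 / r) • (y' - x'))
  rw [Real.dist_eq, dist_eq_norm, ← smul_sub, norm_smul, Real.norm_eq_abs (1 / r), abs_of_pos (by positivity : 0 < 1 / r)] at this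
  simp only [NNReal.coe_ofNat] at this
  refine this.trans (le_of_eq ?_)
  ring

lemma testΨ_lip (x : E2) {r : ℝ} (hr : 0 < r) : LipschitzWith (Real.toNNReal (4 / r)) (testΨ x r) := by
  apply LipschitzWith.of_dist_le_mul
  intro y y'
  rw [Real.coe_toNNReal _ (by positivity), Real.dist_eq, dist_eq_norm]
  unfold testΨ
  have h := bump_scale_lip x hr y y' x
  rw [sub_sub_sub_cancel_right] at h
  have h1 := bump_nonneg ((1 / r) • (y - x))
  have h2 := bump_nonneg ((1 / r) • (y' - x))
  have h3 := bump_le_one ((1 / r) • (y - x))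
  have h4 := bump_le_one ((1 / r) • (y' - x))
  rw [sq_sub_sq, abs_mul, abs_of_nonneg (by positivity)]
  calc _ ≤ 2 * (2 / r * ‖y - y'‖) := by
        apply mul_le_mul (by linarith) h (abs_nonneg _) (by norm_num)
    _ = _ := by ring

lemma bump_scale_out {x : E2} {r : ℝ} (hr : 0 < r) {y : E2} (hy : y ∉ Metric.closedBall x r) :
    bump ((1 / r) • (y - x)) = 0 := by
  apply bump_out
  simp only [Metric.mem_closedBall, not_le, dist_eq_norm] at hy
  simp only [Metric.mem_ball, dist_zero_right, not_lt, norm_smul, Real.norm_eq_abs]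
  rw [abs_of_pos (by positivity), one_div, inv_mul_eq_div, le_div_iff₀ hr]
  linarith

lemma testΨ_tsupp (x : E2) {r : ℝ} (hr : 0 < r) : tsupport (testΨ x r) ⊆ Metric.closedBall x r := by
  apply closure_minimal _ Metric.isClosed_closedBall
  intro y hy
  by_contra h
  apply hy
  show bump ((1 / r) • (y - x)) ^ 2 = 0
  rw [bump_scale_out hr h]; simp

lemma testΨ_cs (x : E2) {r : ℝ} (hr : 0 < r) : HasCompactSupport (testΨ x r) :=
  (isCompact_closedBall x r).of_isClosed_subset (isClosed_tsupport _) (testΨ_tsupp x hr)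

lemma integral_affine (x : E2) {t : ℝ} (G : E2 → ℝ) :
    ∫ z, G (x + t • z) = (t ^ 2)⁻¹ * ∫ y, G y := by
  have h := Measure.integral_comp_smul (volume : Measure E2) (fun y => G (x + y)) t
  rw [h, integral_add_left_eq_self]
  simp

lemma mean_value {Ω : Set E2} {h : E2 → ℝ} {K : NNReal} (hh : LipschitzWith K h)
    (hw : ∀ (θ : E2 → ℝ) (C : NNReal), LipschitzWith C θ → HasCompactSupport θ → tsupport θ ⊆ Ω →
      ∫ x, br (fderiv ℝ h x) (fderiv ℝ θ x) = 0)
    {x : E2} {r : ℝ} (hr : 0 < r) (hx : Metric.closedBall x r ⊆ Ω) :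
    h x * ∫ z, bump z = (r ^ 2)⁻¹ * ∫ y, h y * bump ((1 / r) • (y - x)) := by
  let F : ℝ → ℝ := fun t => ∫ z, h (x + t • z) * bump z
  have hF0 : F 0 = h x * ∫ z, bump z := by
    simp [F, integral_const_mul]
  have hFr : F r = (r ^ 2)⁻¹ * ∫ y, h y * bump ((1 / r) • (y - x)) := by
    rw [← integral_affine x (t := r) (fun y => h y * bump ((1 / r) • (y - x)))]
    apply integral_congr_ae
    refine ae_of_all _ fun z => ?_
    simp [smul_smul, hr.ne']
  have hcont : Continuous F := by
    have h1 : Continuous fun t : ℝ => ∫ z in Metric.closedBall (0 : E2) 1, h (x + t • z) * bump z := by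
      apply continuous_parametric_integral_of_continuous _ (isCompact_closedBall _ _)
      simp only [Function.uncurry_def]
      have := hh.continuous
      have := bump_cont
      fun_prop
    convert h1 using 2 with t
    symm
    apply setIntegral_eq_integral_of_forall_compl_eq_zero
    intro z hz
    rw [bump_out (fun h => hz (Metric.ball_subset_closedBall h)), mul_zero]
  have hder : ∀ t ∈ Ioo 0 r, HasDerivAt F 0 t := by
    intro t ht
    have ht0 := ht.1
    have hd := hasDerivAt_integral_of_dominated_loc_of_lip (μ := (volume : Measure E2))
      (F := fun t z => h (x + t • z) * bump z) (x₀ := t) (s := univ)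
      (F' := fun z => fderiv ℝ h (x + t • z) z * bump z)
      (bound := fun z => K * (‖z‖ * bump z)) univ_mem
      (Eventually.of_forall fun s => by
        have := hh.continuous
        have := bump_cont
        exact Continuous.aestronglyMeasurable (by fun_prop))
      (by
        have := hh.continuous
        have := bump_cont
        exact Continuous.integrable_of_hasCompactSupport (by fun_prop) bump_cs.mul_left)
      (by
        have h2 : (fun z => fderiv ℝ h (x + t • z) z) = fun z =>
            br (fderiv ℝ h (x + t • z)) (innerSL ℝ z) := funext fun z => (br_innerSL _ _).symm
        have h3 : Measurable fun z => fderiv ℝ h (x + t • z) z := by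
          rw [h2]
          unfold br
          refine Finset.measurable_sum _ fun i _ => Measurable.mul ?_ ?_
          · exact (measurable_fderiv_apply_const ℝ h _).comp (by fun_prop)
          · exact Continuous.measurable (by simp only [innerSL_apply_apply]; fun_prop)
        exact (h3.mul bump_cont.measurable).aestronglyMeasurable)
      (ae_of_all _ fun z => LipschitzOnWith.of_dist_le_mul fun a _ b _ => by
        have h1 := hh.dist_le_mul (x + a • z) (x + b • z)
        rw [dist_add_left, dist_eq_norm (a • z), ← sub_smul, norm_smul, Real.dist_eq] at h1
        have h2 := bump_nonneg z
        rw [Real.dist_eq, ← sub_mul, abs_mul, abs_of_nonneg h2]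
        simp only [Real.coe_nnabs]
        rw [abs_of_nonneg (by positivity : 0 ≤ (K:ℝ) * (‖z‖ * bump z))]
        rw [Real.dist_eq]
        rw [Real.norm_eq_abs] at h1
        calc _ ≤ (K * (|a - b| * ‖z‖)) * bump z := mul_le_mul_of_nonneg_right h1 h2
          _ = _ := by ring)
      (by
        have := bump_cont
        apply Integrable.const_mul
        exact Continuous.integrable_of_hasCompactSupport (by fun_prop) bump_cs.mul_left)
      (by
        have h1 : ∀ᵐ y : E2, DifferentiableAt ℝ h y := hh.ae_differentiableAt
        have h2 : ∀ᵐ z : E2, DifferentiableAt ℝ h (x + t • z) := by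
          rw [ae_iff] at h1 ⊢
          have h3 : {z : E2 | ¬ DifferentiableAt ℝ h (x + t • z)} =
            (t • ·) ⁻¹' ((x + ·) ⁻¹' {y | ¬ DifferentiableAt ℝ h y}) := rfl
          rw [h3, Measure.addHaar_preimage_smul _ ht0.ne', measure_preimage_add, h1, mul_zero]
        filter_upwards [h2] with z hz
        have h4 : HasDerivAt (fun s : ℝ => x + s • z) z t := by
          simpa using ((hasDerivAt_id t).smul_const z).const_add x
        exact (hz.hasFDerivAt.comp_hasDerivAt t h4).mul_const _)
    have hz : ∫ z, fderiv ℝ h (x + t • z) z * bump z = 0 := by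
      have hΨ := hw (testΨ x t) _ (testΨ_lip x ht0) (testΨ_cs x ht0)
        ((testΨ_tsupp x ht0).trans ((Metric.closedBall_subset_closedBall ht.2.le).trans hx))
      have h5 := integral_affine x (t := t) (fun y => br (fderiv ℝ h y) (fderiv ℝ (testΨ x t) y))
      rw [hΨ, mul_zero] at h5
      have h6 : ∀ z, br (fderiv ℝ h (x + t • z)) (fderiv ℝ (testΨ x t) (x + t • z)) =
          (-(4 / t)) * (fderiv ℝ h (x + t • z) z * bump z) := by
        intro z
        rw [testΨ_fderiv x]
        have : ∀ (L M : E2 →L[ℝ] ℝ) (c : ℝ), br L (c • M) = c * br L M := by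
          intro L M c
          simp [br, Fin.sum_univ_two]; ring
        rw [this, br_innerSL, add_sub_cancel_left, smul_smul, one_div, inv_mul_cancel₀ ht0.ne', one_smul,
          map_smul, smul_eq_mul]
        field_simp
      simp only [h6] at h5
      rw [integral_const_mul] at h5
      exact (mul_eq_zero.1 h5).resolve_left (by
        have : 0 < 4 / t := by positivity
        linarith)
    rw [hz] at hd
    exact hd.2
  obtain ⟨c, _, hc⟩ := exists_hasDerivAt_eq_slope F (fun _ => 0) hr hcont.continuousOn hder
  rw [← hF0, ← hFr]
  rw [eq_comm, div_eq_zero_iff] at hc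
  rcases hc with hc | hc <;> linarith

lemma interior_lip : ∃ c0 > 0, ∀ (Ω : Set E2) (h : E2 → ℝ) (K : NNReal) (M r : ℝ), 0 < r →
    LipschitzWith K h → (∀ y ∈ Ω, |h y| ≤ M) →
    (∀ (θ : E2 → ℝ) (C : NNReal), LipschitzWith C θ → HasCompactSupport θ → tsupport θ ⊆ Ω →
      ∫ x, br (fderiv ℝ h x) (fderiv ℝ θ x) = 0) →
    ∀ x x', Metric.closedBall x r ⊆ Ω → Metric.closedBall x' r ⊆ Ω →
      |h x - h x'| ≤ c0 * M / r * dist x x' := by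
  set I := ∫ z, bump z with hIdef
  have hI : 0 < I := bump_int_pos
  set V := (volume : Measure E2).real (Metric.closedBall (0 : E2) 1) with hV
  have hVpos : 0 < V := by
    rw [hV, Measure.real, ENNReal.toReal_pos_iff]
    exact ⟨Metric.measure_closedBall_pos _ _ one_pos, measure_closedBall_lt_top⟩
  refine ⟨4 * V / I, by positivity, ?_⟩
  intro Ω h K M r hr hh hM hw x x' hx hx'
  have hm := mean_value hh hw hr hx
  have hm' := mean_value hh hw hr hx'
  have hinteg : ∀ x : E2, Integrable (fun y => h y * bump ((1 / r) • (y - x))) := by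
    intro x
    have := hh.continuous
    have := bump_cont
    apply Continuous.integrable_of_hasCompactSupport (by fun_prop)
    apply HasCompactSupport.intro (isCompact_closedBall x r)
    intro y hy
    rw [bump_scale_out hr hy, mul_zero]
  have hM0 : 0 ≤ M := (abs_nonneg _).trans (hM x (hx (Metric.mem_closedBall_self hr.le)))
  have hdiff : (h x - h x') * I = (r ^ 2)⁻¹ * ∫ y, h y * (bump ((1 / r) • (y - x)) - bump ((1 / r) • (y - x'))) := by
    simp only [mul_sub]
    rw [integral_sub (hinteg x) (hinteg x'), mul_sub, ← hm, ← hm']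
    ring
  have hvol : ∀ x : E2, (volume : Measure E2).real (Metric.closedBall x r) = r ^ 2 * V := by
    intro x
    rw [hV, Measure.real, Measure.addHaar_closedBall' _ _ hr.le]
    simp [Measure.real, hr.le]
  have hb : |∫ y, h y * (bump ((1 / r) • (y - x)) - bump ((1 / r) • (y - x')))| ≤
      M * (2 / r * dist x x') * (2 * r ^ 2 * V) := by
    rw [← setIntegral_eq_integral_of_forall_compl_eq_zero (s := Metric.closedBall x r ∪ Metric.closedBall x' r)]
    · have hfin : volume (Metric.closedBall x r ∪ Metric.closedBall x' r) < ⊤ :=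
        (measure_union_le _ _).trans_lt (ENNReal.add_lt_top.2 ⟨measure_closedBall_lt_top, measure_closedBall_lt_top⟩)
      have h1 := norm_setIntegral_le_of_norm_le_const (μ := (volume : Measure E2)) hfin
        (f := fun y => h y * (bump ((1 / r) • (y - x)) - bump ((1 / r) • (y - x')))) (C := M * (2 / r * dist x x'))
        (fun y hy => by
          rw [norm_mul, Real.norm_eq_abs, Real.norm_eq_abs]
          apply mul_le_mul _ _ (abs_nonneg _) hM0
          · exact hM y (hy.elim (fun h => hx h) fun h => hx' h)
          · have := bump_scale_lip x hr y y x'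
            rwa [sub_sub_sub_cancel_left, ← dist_eq_norm, dist_comm] at this)
      rw [Real.norm_eq_abs] at h1
      refine h1.trans ?_
      apply mul_le_mul_of_nonneg_left _ (by positivity)
      refine (measureReal_union_le _ _).trans ?_
      rw [hvol, hvol]
      linarith
    · intro y hy
      simp only [mem_union, not_or] at hy
      rw [bump_scale_out hr hy.1, bump_scale_out hr hy.2]
      simp
  have h3 : |h x - h x'| * I ≤ (r ^ 2)⁻¹ * (M * (2 / r * dist x x') * (2 * r ^ 2 * V)) := by
    have h4 : |h x - h x'| * I = |(h x - h x') * I| := by rw [abs_mul, abs_of_pos hI]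
    rw [h4, hdiff, abs_mul, abs_of_pos (by positivity : 0 < (r ^ 2)⁻¹)]
    exact mul_le_mul_of_nonneg_left hb (by positivity)
  rw [← le_div_iff₀ hI] at h3
  refine h3.trans (le_of_eq ?_)
  field_simp
  ring


open EuclideanGeometry

open Classical in
/-- The folding map onto the closed unit disk centered at `c`. -/
noncomputable def fold (c x : E2) : E2 := if dist x c < 1 then x else inversion c 1 x

lemma fold_in {c x : E2} (h : dist x c < 1) : fold c x = x := if_pos h

lemma fold_out {c x : E2} (h : ¬ dist x c < 1) : fold c x = inversion c 1 x := if_neg h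

lemma fold_mem (c x : E2) : fold c x ∈ Metric.closedBall c 1 := by
  rw [Metric.mem_closedBall]
  by_cases h : dist x c < 1
  · rw [fold_in h]; exact h.le
  · rw [fold_out h, dist_inversion_center]
    rw [not_lt] at h
    rw [div_le_one (by linarith)]
    simpa using h

lemma fold_mixed {c x y : E2} (hx : dist x c < 1) (hy : ¬ dist y c < 1) :
    dist x (inversion c 1 y) ≤ dist x y := by
  rw [not_lt] at hy
  rw [dist_eq_norm] at hx hy
  simp only [inversion, vsub_eq_sub, vadd_eq_add]
  rw [dist_eq_norm y c, dist_eq_norm, dist_eq_norm]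
  set p := x - c with hp
  set q := y - c with hq
  have e1 : x - ((1 / ‖q‖) ^ 2 • q + c) = p - (1 / ‖q‖) ^ 2 • q := by rw [hp]; abel
  have e2 : x - y = p - q := by rw [hp, hq]; abel
  rw [e1, e2]
  apply le_of_sq_le_sq _ (norm_nonneg _)
  clear_value p q
  clear e1 e2
  have hq0 : 0 < ‖q‖ := by linarith
  obtain ⟨k, hk⟩ : ∃ k : ℝ, k = (1 / ‖q‖) ^ 2 := ⟨_, rfl⟩
  rw [← hk, norm_sub_sq_real p (k • q), norm_sub_sq_real p q, inner_smul_right, norm_smul, mul_pow,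
    Real.norm_eq_abs, sq_abs]
  have hkq : k * ‖q‖ ^ 2 = 1 := by rw [hk]; field_simp
  have hk0 : 0 ≤ k := by rw [hk]; positivity
  have hk1 : k ≤ 1 := by
    have h1 : 1 ≤ ‖q‖ ^ 2 := by nlinarith
    have h2 : k * 1 ≤ k * ‖q‖ ^ 2 := mul_le_mul_of_nonneg_left h1 hk0
    linarith
  have hin : inner ℝ p q ≤ ‖q‖ := by
    refine (real_inner_le_norm p q).trans ?_
    nlinarith [norm_nonneg q]
  have h1 : 0 ≤ (1 - k) * (‖q‖ ^ 2 + 1 - 2 * inner ℝ p q) := by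
    apply mul_nonneg (by linarith)
    nlinarith [sq_nonneg (‖q‖ - 1)]
  have h2 : k ^ 2 * ‖q‖ ^ 2 = k := by
    calc k ^ 2 * ‖q‖ ^ 2 = k * (k * ‖q‖ ^ 2) := by ring
      _ = k := by rw [hkq, mul_one]
  rw [h2]
  have h3 : (1 - k) * (‖q‖ ^ 2 + 1 - 2 * inner ℝ p q) =
    ‖q‖ ^ 2 - k * ‖q‖ ^ 2 + 1 - k - 2 * inner ℝ p q + 2 * (k * inner ℝ p q) := by ring
  rw [h3, hkq] at h1
  linarith

lemma fold_lip (c : E2) : LipschitzWith 1 (fold c) := by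
  apply LipschitzWith.of_dist_le_mul
  intro x y
  simp only [NNReal.coe_one, one_mul]
  by_cases hx : dist x c < 1 <;> by_cases hy : dist y c < 1
  · rw [fold_in hx, fold_in hy]
  · rw [fold_in hx, fold_out hy]; exact fold_mixed hx hy
  · rw [fold_out hx, fold_in hy, dist_comm, dist_comm x]; exact fold_mixed hy hx
  · rw [fold_out hx, fold_out hy]
    rw [not_lt] at hx hy
    have hxc : x ≠ c := by rintro rfl; simp at hx; linarith
    have hyc : y ≠ c := by rintro rfl; simp at hy; linarith
    rw [dist_inversion_inversion hxc hyc]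
    apply mul_le_of_le_one_left dist_nonneg
    rw [div_le_one (by positivity)]
    nlinarith

lemma inv_fderiv (c : E2) (f : E2 → ℝ) {x : E2} (hx : x ≠ c) :
    fderiv ℝ (fun y => f (inversion c 1 y)) x = (fderiv ℝ f (inversion c 1 x)).comp
      ((1 / dist x c) ^ 2 • ((ℝ ∙ (x - c))ᗮ.reflection : E2 →L[ℝ] E2)) := by
  by_cases hf : DifferentiableAt ℝ f (inversion c 1 x)
  · exact (hf.hasFDerivAt.comp x (hasFDerivAt_inversion (R := 1) hx)).fderiv
  · rw [fderiv_zero_of_not_differentiableAt hf, fderiv_zero_of_not_differentiableAt]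
    · simp
    · intro h
      apply hf
      have hRx : inversion c 1 x ≠ c := by
        rw [Ne, inversion_eq_center one_ne_zero]; exact hx
      have h2 := (hasFDerivAt_inversion (R := 1) hRx).differentiableAt
      have h3 : DifferentiableAt ℝ (fun y => f (inversion c 1 y)) (inversion c 1 (inversion c 1 x)) := by
        rwa [inversion_inversion c one_ne_zero]
      have h4 := h3.comp (inversion c 1 x) h2
      have h5 : ((fun y => f (inversion c 1 y)) ∘ inversion c 1) = f := by
        funext y; simp [inversion_inversion c one_ne_zero]
      rwa [h5] at h4

lemma abs_det_inv (k : ℝ) (U : Submodule ℝ E2) :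
    |(k • (U.reflection : E2 →L[ℝ] E2)).det| = k ^ 2 := by
  have h1 : ((k • (U.reflection : E2 →L[ℝ] E2) : E2 →L[ℝ] E2) : E2 →ₗ[ℝ] E2) =
    k • U.reflection.toLinearEquiv.toLinearMap := by ext; simp
  have h2 : LinearMap.det U.reflection.toLinearEquiv.toLinearMap = (-1) ^ Module.finrank ℝ Uᗮ := U.det_reflection
  rw [ContinuousLinearMap.det, h1, LinearMap.det_smul, h2]
  simp [abs_mul]

open Classical in
lemma conformal {c : E2} {u ψ : E2 → ℝ} {K C : NNReal} (hu : LipschitzWith K u) (hψ : LipschitzWith C ψ)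
    (hc : HasCompactSupport ψ)
    (hB : ∀ (θ : E2 → ℝ) (C : NNReal), LipschitzWith C θ → HasCompactSupport θ →
      tsupport θ ⊆ Metric.closedBall c 1 →
      ∫ x in Metric.ball c 1, br (fderiv ℝ u x) (fderiv ℝ θ x) = 0) :
    ∫ x, br (fderiv ℝ (fun y => u (fold c y)) x) (fderiv ℝ ψ x) =
      2 * ∫ x in Metric.ball c 1, br (fderiv ℝ u x) (fderiv ℝ ψ x) := by
  set R : E2 → E2 := inversion c 1 with hR
  have hRR : ∀ x, R (R x) = x := inversion_inversion c one_ne_zero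
  have hRd : ∀ x, dist (R x) c = 1 / dist x c := by
    intro x; rw [hR, dist_inversion_center]; simp
  -- the cut-off reflected test function
  obtain ⟨ρ0, hρ0⟩ := (Metric.isBounded_iff_subset_closedBall c).1 hc.isBounded
  set ρ := max (ρ0 + 1) 1 with hρdef
  have hρ1 : 1 ≤ ρ := le_max_right _ _
  have hρp : 0 < ρ := by linarith
  have hρ : ∀ y, ρ ≤ dist y c → ψ y = 0 := by
    intro y hy
    by_contra h
    have := hρ0 (subset_tsupport _ h)
    rw [Metric.mem_closedBall] at this
    linarith [le_max_left (ρ0 + 1) 1]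
  let r := 1 / ρ
  have hr : 0 < r := by positivity
  have hr1 : r ≤ 1 := by rw [div_le_one hρp]; exact hρ1
  let F : E2 → ℝ := fun x => if r ≤ dist x c then ψ (R x) else 0
  have hFin : ∀ x, r ≤ dist x c → F x = ψ (R x) := fun x hx => if_pos hx
  have hFout : ∀ x, ¬ r ≤ dist x c → F x = 0 := fun x hx => if_neg hx
  have hsmall : ∀ x, x ≠ c → dist x c ≤ r → ψ (R x) = 0 := by
    intro x hx h
    apply hρ
    rw [hRd, le_div_iff₀ (dist_pos.2 hx)]
    calc ρ * dist x c ≤ ρ * r := by gcongr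
      _ = 1 := by simp only [r]; field_simp
  have hFne : ∀ x, x ≠ c → F x = ψ (R x) := by
    intro x hx
    by_cases h : r ≤ dist x c
    · exact hFin x h
    · rw [hFout x h, hsmall x hx (not_le.1 h).le]
  have hne : ∀ x, r ≤ dist x c → x ≠ c := by
    rintro x hx rfl
    simp at hx; linarith
  have hFL : LipschitzWith (C * Real.toNNReal (ρ ^ 2)) F := by
    apply glue (A := {x | r ≤ dist x c}) (isClosed_le continuous_const (by fun_prop))
    · apply LipschitzOnWith.of_dist_le_mul
      intro x hx y hy
      have hx' : r ≤ dist x c := hx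
      have hy' : r ≤ dist y c := hy
      rw [hFin x hx', hFin y hy']
      refine (hψ.dist_le_mul _ _).trans ?_
      rw [hR, dist_inversion_inversion (hne x hx') (hne y hy'), NNReal.coe_mul,
        Real.coe_toNNReal _ (by positivity), mul_assoc]
      gcongr
      have : r * r ≤ dist x c * dist y c := by gcongr
      calc 1 ^ 2 / (dist x c * dist y c) ≤ 1 ^ 2 / (r * r) := by gcongr
        _ = ρ ^ 2 := by simp only [r]; field_simp
    · exact fun x hx => hFout x hx
    · intro x hx
      have h := frontier_le_subset_eq continuous_const (by fun_prop) hx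
      have h' : r = dist x c := h
      rw [hFin x h'.le, hsmall x (hne x h'.le) h'.ge]
  let θ : E2 → ℝ := fun x => if dist x c ≤ 1 then ψ x - F x else 0
  have hθin : ∀ x, dist x c ≤ 1 → θ x = ψ x - F x := fun x hx => if_pos hx
  have hθout : ∀ x, ¬ dist x c ≤ 1 → θ x = 0 := fun x hx => if_neg hx
  have hθL : LipschitzWith (C + C * Real.toNNReal (ρ ^ 2)) θ := by
    apply glue (Metric.isClosed_closedBall (x := c) (ε := 1))
    · intro x hx y hy
      rw [hθin x hx, hθin y hy]
      exact (hψ.sub hFL) x y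
    · exact fun x hx => hθout x hx
    · intro x hx
      rw [frontier_closedBall c one_ne_zero, Metric.mem_sphere] at hx
      rw [hθin x hx.le, hFne x (hne x (by rw [hx]; exact hr1)), hR,
        inversion_of_mem_sphere (by rw [Metric.mem_sphere]; exact hx), sub_self]
  have hθs : tsupport θ ⊆ Metric.closedBall c 1 := by
    apply closure_minimal _ Metric.isClosed_closedBall
    intro x hx
    by_contra h
    exact hx (hθout x h)
  have hθc : HasCompactSupport θ :=
    (isCompact_closedBall c 1).of_isClosed_subset (isClosed_tsupport _) hθs
  have hθ0 := hB θ _ hθL hθc hθs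
  -- integrability
  have huf : LipschitzWith (K * 1) (fun y => u (fold c y)) := hu.comp (fold_lip c)
  have hinteg := integrable_br huf hψ hc
  have hFc : HasCompactSupport (fun x => ψ x - θ x) := hc.sub hθc
  -- interior part
  have hopen : IsOpen {x : E2 | 1 < dist x c} := isOpen_lt continuous_const (by fun_prop)
  have hin : ∫ x in Metric.ball c 1, br (fderiv ℝ (fun y => u (fold c y)) x) (fderiv ℝ ψ x) =
      ∫ x in Metric.ball c 1, br (fderiv ℝ u x) (fderiv ℝ ψ x) := by
    apply setIntegral_congr_fun measurableSet_ball
    intro x hx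
    have hev : (fun y => u (fold c y)) =ᶠ[𝓝 x] u := by
      filter_upwards [Metric.isOpen_ball.mem_nhds hx] with y hy
      rw [fold_in hy]
    simp only [hev.fderiv_eq]
  have hX : {x : E2 | 1 < dist x c} = R '' (Metric.ball c 1 \ {c}) := by
    ext x
    constructor
    · intro hx
      have hx' : 1 < dist x c := hx
      refine ⟨R x, ⟨?_, ?_⟩, hRR x⟩
      · rw [Metric.mem_ball, hRd, div_lt_one (by linarith)]; exact hx'
      · rw [mem_singleton_iff, hR, inversion_eq_center one_ne_zero]
        rintro rfl
        simp at hx'; linarith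
    · rintro ⟨y, ⟨hy, hyc⟩, rfl⟩
      show 1 < dist (R y) c
      rw [hRd, lt_div_iff₀ (dist_pos.2 hyc), one_mul]
      exact hy
  have hext : ∫ x in {x : E2 | 1 < dist x c}, br (fderiv ℝ (fun y => u (fold c y)) x) (fderiv ℝ ψ x) =
      ∫ x in Metric.ball c 1, br (fderiv ℝ u x) (fderiv ℝ F x) := by
    have h1 : ∫ x in {x : E2 | 1 < dist x c}, br (fderiv ℝ (fun y => u (fold c y)) x) (fderiv ℝ ψ x) =
        ∫ x in {x : E2 | 1 < dist x c}, br (fderiv ℝ (fun y => u (R y)) x) (fderiv ℝ ψ x) := by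
      apply setIntegral_congr_fun hopen.measurableSet
      intro x hx
      have hev : (fun y => u (fold c y)) =ᶠ[𝓝 x] fun y => u (R y) := by
        filter_upwards [hopen.mem_nhds hx] with y hy
        have hy' : 1 < dist y c := hy
        rw [fold_out (by linarith)]
      simp only [hev.fderiv_eq]
    have hms : MeasurableSet (Metric.ball c 1 \ {c}) := measurableSet_ball.diff (measurableSet_singleton c)
    rw [h1, hX, integral_image_eq_integral_abs_det_fderiv_smul volume hms
      (fun x hx => (hasFDerivAt_inversion (R := 1) hx.2).hasFDerivWithinAt)
      (inversion_injective c one_ne_zero).injOn]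
    have h2 : ∫ x in Metric.ball c 1, br (fderiv ℝ u x) (fderiv ℝ F x) =
        ∫ x in Metric.ball c 1 \ {c}, br (fderiv ℝ u x) (fderiv ℝ F x) := by
      apply setIntegral_congr_set
      exact (sdiff_null_ae_eq_self (measure_singleton c)).symm
    rw [h2]
    apply setIntegral_congr_fun hms
    intro x hx
    have hxc : x ≠ c := hx.2
    have hev : F =ᶠ[𝓝 x] fun y => ψ (R y) := by
      filter_upwards [isOpen_ne.mem_nhds hxc] with y hy
      exact hFne y hy
    have e1 : fderiv ℝ F x = _ := hev.fderiv_eq.trans (inv_fderiv c ψ hxc)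
    have e2 : fderiv ℝ u x = (fderiv ℝ (fun y => u (R y)) (inversion c 1 x)).comp
        ((1 / dist x c) ^ 2 • ((ℝ ∙ (x - c))ᗮ.reflection : E2 →L[ℝ] E2)) := by
      have h := inv_fderiv c (fun y => u (R y)) hxc
      have h5 : (fun y => (fun y => u (R y)) (inversion c 1 y)) = u := by
        funext y; exact congrArg u (hRR y)
      rw [h5] at h
      exact h
    simp only
    rw [e1, e2, abs_det_inv, smul_eq_mul, br_comp_isom]
  -- sphere
  have hunion : (univ : Set E2) =ᵐ[volume] (Metric.ball c 1 ∪ {x : E2 | 1 < dist x c} : Set E2) := by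
    have h0 : (volume : Measure E2) (Metric.sphere c 1) = 0 := Measure.addHaar_sphere _ _ _
    have : (Metric.ball c 1 ∪ {x : E2 | 1 < dist x c} : Set E2) = univ \ Metric.sphere c 1 := by
      ext x
      simp only [mem_union, Metric.mem_ball, Set.mem_sdiff, mem_univ, true_and, Metric.mem_sphere]
      exact (lt_or_lt_iff_ne (a := dist x c) (b := 1))
    rw [this]
    exact (sdiff_null_ae_eq_self h0).symm
  have hdisj : Disjoint (Metric.ball c 1) {x : E2 | 1 < dist x c} := by
    rw [Set.disjoint_left]
    intro x hx hx'
    have h1 : dist x c < 1 := hx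
    have h2 : 1 < dist x c := hx'
    linarith
  have hsplit : ∫ x, br (fderiv ℝ (fun y => u (fold c y)) x) (fderiv ℝ ψ x) =
      (∫ x in Metric.ball c 1, br (fderiv ℝ u x) (fderiv ℝ ψ x)) +
      ∫ x in Metric.ball c 1, br (fderiv ℝ u x) (fderiv ℝ F x) := by
    rw [← setIntegral_univ, setIntegral_congr_set hunion,
      setIntegral_union hdisj hopen.measurableSet hinteg.integrableOn hinteg.integrableOn, hin, hext]
  have hlast : ∫ x in Metric.ball c 1, br (fderiv ℝ u x) (fderiv ℝ F x) =
      ∫ x in Metric.ball c 1, br (fderiv ℝ u x) (fderiv ℝ ψ x) := by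
    have h1 : ∫ x in Metric.ball c 1, br (fderiv ℝ u x) (fderiv ℝ F x) =
      ∫ x in Metric.ball c 1, (br (fderiv ℝ u x) (fderiv ℝ ψ x) - br (fderiv ℝ u x) (fderiv ℝ θ x)) := by
      apply setIntegral_congr_ae measurableSet_ball
      filter_upwards [hψ.ae_differentiableAt, hFL.ae_differentiableAt] with x h1 h2 hx
      have hev : θ =ᶠ[𝓝 x] ψ - F := by
        filter_upwards [Metric.isOpen_ball.mem_nhds hx] with y hy
        exact hθin y (le_of_lt hy)
      rw [hev.fderiv_eq, fderiv_sub h1 h2, br_sub_right]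
      ring
    rw [h1, integral_sub (integrable_br hu hψ hc).integrableOn (integrable_br hu hθL hθc).integrableOn,
      hθ0, sub_zero]
  rw [hsplit, hlast]
  ring


lemma innerReg_ball {Ω : Set E2} {x : E2} {σ r : ℝ} (hx : x ∈ innerReg Ω σ) (hr : 0 ≤ r) (h : r < σ) :
    Metric.closedBall x r ⊆ Ω := by
  obtain ⟨hxΩ, hxd⟩ := hx
  intro y hy
  by_contra hyΩ
  obtain ⟨z, hz, hzf⟩ := meets_frontier (convex_closedBall x r).isPreconnected
    (⟨x, Metric.mem_closedBall_self hr, hxΩ⟩ : (Metric.closedBall x r ∩ Ω).Nonempty)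
    (⟨y, hy, hyΩ⟩ : (Metric.closedBall x r ∩ Ωᶜ).Nonempty)
  have h1 := Metric.infDist_le_dist_of_mem (x := x) hzf
  rw [Metric.mem_closedBall, dist_comm] at hz
  linarith

lemma ball_weak {Ω : Set E2} {a u : E2 → ℝ} {c : E2} {κ : ℝ} (hκ : κ ≠ 0)
    (ha : ∀ x ∈ Metric.ball c 1, a x = κ)
    (hw : ∀ (θ : E2 → ℝ) (C : NNReal), LipschitzWith C θ → HasCompactSupport θ → tsupport θ ⊆ Ω →
      ∫ x, a x * br (fderiv ℝ u x) (fderiv ℝ θ x) = 0)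
    (hsub : Metric.closedBall c 1 ⊆ Ω) :
    ∀ (θ : E2 → ℝ) (C : NNReal), LipschitzWith C θ → HasCompactSupport θ →
      tsupport θ ⊆ Metric.closedBall c 1 →
      ∫ x in Metric.ball c 1, br (fderiv ℝ u x) (fderiv ℝ θ x) = 0 := by
  intro θ C hθ hc hs
  have h := hw θ C hθ hc (hs.trans hsub)
  rw [← setIntegral_eq_integral_of_forall_compl_eq_zero (s := Metric.closedBall c 1)] at h
  · have hae : (Metric.ball c 1 : Set E2) =ᵐ[volume] Metric.closedBall c 1 := by
      have h0 : (volume : Measure E2) (Metric.sphere c 1) = 0 := Measure.addHaar_sphere _ _ _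
      rw [← Metric.closedBall_sdiff_sphere]
      exact sdiff_null_ae_eq_self h0
    rw [← setIntegral_congr_set hae] at h
    have h2 : ∫ x in Metric.ball c 1, a x * br (fderiv ℝ u x) (fderiv ℝ θ x) =
        ∫ x in Metric.ball c 1, κ * br (fderiv ℝ u x) (fderiv ℝ θ x) := by
      apply setIntegral_congr_fun measurableSet_ball
      intro x hx
      simp only [ha x hx]
    rw [h2, integral_const_mul] at h
    exact (mul_eq_zero.1 h).resolve_left hκ
  · intro x hx
    rw [fderiv_zero_off (fun h' => hx (hs h')), br_zero_right, mul_zero]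

lemma int_add3 {f g k : E2 → ℝ} (hf : Integrable f) (hg : Integrable g) (hk : Integrable k) :
    ∫ x, (f x + g x + k x) = (∫ x, f x) + (∫ x, g x) + ∫ x, k x := by
  have h := integral_add (hf.add hg) hk
  simp only [Pi.add_apply] at h
  rw [h, integral_add hf hg]

lemma harm_of_weak {Ω : Set E2} {a u : E2 → ℝ} {c c' : E2} {κp κm : ℝ} (hκp : κp ≠ 0) (hκm : κm ≠ 0)
    {K : NNReal} (hu : LipschitzWith K u)
    (hap : ∀ x ∈ Metric.ball c 1, a x = κp) (ham : ∀ x ∈ Metric.ball c' 1, a x = κm)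
    (ha : ∀ x, a x = 1 + (Metric.ball c 1).indicator (fun _ => κp - 1) x
      + (Metric.ball c' 1).indicator (fun _ => κm - 1) x)
    (hw : ∀ (θ : E2 → ℝ) (C : NNReal), LipschitzWith C θ → HasCompactSupport θ → tsupport θ ⊆ Ω →
      ∫ x, a x * br (fderiv ℝ u x) (fderiv ℝ θ x) = 0)
    (hsub : Metric.closedBall c 1 ⊆ Ω) (hsub' : Metric.closedBall c' 1 ⊆ Ω)
    (θ : E2 → ℝ) (C : NNReal) (hθ : LipschitzWith C θ) (hc : HasCompactSupport θ) (hs : tsupport θ ⊆ Ω) :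
    ∫ x, br (fderiv ℝ (fun y => u y + (κp - 1) / 2 * u (fold c y) + (κm - 1) / 2 * u (fold c' y)) x)
      (fderiv ℝ θ x) = 0 := by
  have hf : LipschitzWith (K * 1) (fun y => u (fold c y)) := hu.comp (fold_lip c)
  have hf' : LipschitzWith (K * 1) (fun y => u (fold c' y)) := hu.comp (fold_lip c')
  have e1 := conformal hu hθ hc (ball_weak hκp hap hw hsub)
  have e2 := conformal hu hθ hc (ball_weak hκm ham hw hsub')
  have i0 := integrable_br hu hθ hc
  have i1 := integrable_br hf hθ hc
  have i2 := integrable_br hf' hθ hc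
  have h1 : ∫ x, br (fderiv ℝ (fun y => u y + (κp - 1) / 2 * u (fold c y) + (κm - 1) / 2 * u (fold c' y)) x)
      (fderiv ℝ θ x) = ∫ x, (br (fderiv ℝ u x) (fderiv ℝ θ x)
        + (κp - 1) / 2 * br (fderiv ℝ (fun y => u (fold c y)) x) (fderiv ℝ θ x)
        + (κm - 1) / 2 * br (fderiv ℝ (fun y => u (fold c' y)) x) (fderiv ℝ θ x)) := by
    apply integral_congr_ae
    filter_upwards [hu.ae_differentiableAt, hf.ae_differentiableAt, hf'.ae_differentiableAt] with x d0 d1 d2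
    have := ((d0.hasFDerivAt.add (d1.hasFDerivAt.const_mul ((κp - 1) / 2))).add
      (d2.hasFDerivAt.const_mul ((κm - 1) / 2))).fderiv
    have h' : fderiv ℝ (fun y => u y + (κp - 1) / 2 * u (fold c y) + (κm - 1) / 2 * u (fold c' y)) x = _ := this
    rw [h', br_add_left, br_add_left, br_smul_left, br_smul_left]
  have h2 := hw θ C hθ hc hs
  have h3 : ∫ x, a x * br (fderiv ℝ u x) (fderiv ℝ θ x) = ∫ x, (br (fderiv ℝ u x) (fderiv ℝ θ x)
        + (Metric.ball c 1).indicator (fun x => (κp - 1) * br (fderiv ℝ u x) (fderiv ℝ θ x)) x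
        + (Metric.ball c' 1).indicator (fun x => (κm - 1) * br (fderiv ℝ u x) (fderiv ℝ θ x)) x) := by
    congr 1
    funext x
    rw [ha x]
    by_cases h1 : x ∈ Metric.ball c 1 <;> by_cases h2 : x ∈ Metric.ball c' 1 <;>
      simp only [h1, h2, indicator_of_mem, indicator_of_notMem, not_false_eq_true] <;> ring
  rw [h3, int_add3 i0 ((i0.const_mul _).indicator measurableSet_ball)
    ((i0.const_mul _).indicator measurableSet_ball),
    integral_indicator measurableSet_ball, integral_indicator measurableSet_ball,
    integral_const_mul, integral_const_mul] at h2
  rw [h1, int_add3 i0 (i1.const_mul _) (i2.const_mul _),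
    integral_const_mul, integral_const_mul, e1, e2]
  linarith

lemma lip_step {u h : E2 → ℝ} (hu : Continuous u) {c c' : E2} {s t H A : ℝ} (hs : 0 < 1 + s) (hA : 0 ≤ A)
    (hdef : ∀ x, h x = u x + s * u (fold c x) + t * u (fold c' x))
    (hh : ∀ x ∈ Metric.ball c 1, ∀ x' ∈ Metric.ball c 1, |h x - h x'| ≤ H * dist x x')
    (hq : ∀ x ∈ Metric.closedBall c' 1, ∀ x' ∈ Metric.closedBall c' 1, |u x - u x'| ≤ A * dist x x') :
    ∀ x ∈ Metric.closedBall c 1, ∀ x' ∈ Metric.closedBall c 1,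
      |u x - u x'| ≤ (H + |t| * A) / (1 + s) * dist x x' := by
  have hball : ∀ x ∈ Metric.ball c 1, ∀ x' ∈ Metric.ball c 1,
      |u x - u x'| ≤ (H + |t| * A) / (1 + s) * dist x x' := by
    intro x hx x' hx'
    have h1 := hh x hx x' hx'
    rw [hdef x, hdef x', fold_in hx, fold_in hx'] at h1
    have h2 := hq _ (fold_mem c' x) _ (fold_mem c' x')
    have h3 : dist (fold c' x) (fold c' x') ≤ dist x x' := by
      simpa using (fold_lip c').dist_le_mul x x'
    have h4 : |t * (u (fold c' x) - u (fold c' x'))| ≤ |t| * A * dist x x' := by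
      rw [abs_mul, mul_assoc]
      exact mul_le_mul_of_nonneg_left (h2.trans (mul_le_mul_of_nonneg_left h3 hA)) (abs_nonneg _)
    have h5 : |(1 + s) * (u x - u x')| ≤ H * dist x x' + |t| * A * dist x x' := by
      have e : (1 + s) * (u x - u x') = (u x + s * u x + t * u (fold c' x)
        - (u x' + s * u x' + t * u (fold c' x'))) - t * (u (fold c' x) - u (fold c' x')) := by ring
      rw [e]
      exact (abs_sub _ _).trans (add_le_add h1 h4)
    rw [abs_mul, abs_of_pos hs] at h5
    rw [div_mul_eq_mul_div, le_div_iff₀ hs]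
    linarith
  have hcl : IsClosed {p : E2 × E2 | |u p.1 - u p.2| ≤ (H + |t| * A) / (1 + s) * dist p.1 p.2} :=
    isClosed_le (by fun_prop) (by fun_prop)
  have hsub : Metric.ball c 1 ×ˢ Metric.ball c 1 ⊆
      {p : E2 × E2 | |u p.1 - u p.2| ≤ (H + |t| * A) / (1 + s) * dist p.1 p.2} :=
    fun p hp => hball _ hp.1 _ hp.2
  have h6 := closure_minimal hsub hcl
  rw [closure_prod_eq, closure_ball c one_ne_zero] at h6
  intro x hx y hy
  exact h6 (show (x, y) ∈ Metric.closedBall c 1 ×ˢ Metric.closedBall c 1 from ⟨hx, hy⟩)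

/-- The constant in the Lipschitz bound on the disk. -/
noncomputable def gfac (s t : ℝ) : ℝ :=
  ((1 + |t| / (1 + t)) / (1 + s)) / (1 - |t| / (1 + t) * (|s| / (1 + s)))

lemma gfac_aux {s t : ℝ} (hs : |s| < 1 + s) (ht : |t| < 1 + t) :
    0 < 1 - |t| / (1 + t) * (|s| / (1 + s)) := by
  have hs0 : 0 < 1 + s := (abs_nonneg s).trans_lt hs
  have ht0 : 0 < 1 + t := (abs_nonneg t).trans_lt ht
  have h1 : |t| / (1 + t) < 1 := (div_lt_one ht0).2 ht
  have h2 : |s| / (1 + s) < 1 := (div_lt_one hs0).2 hs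
  have h3 : 0 ≤ |t| / (1 + t) := by positivity
  have h4 : 0 ≤ |s| / (1 + s) := by positivity
  nlinarith

lemma gfac_nonneg {s t : ℝ} (hs : |s| < 1 + s) (ht : |t| < 1 + t) : 0 ≤ gfac s t := by
  have hs0 : 0 < 1 + s := (abs_nonneg s).trans_lt hs
  have ht0 : 0 < 1 + t := (abs_nonneg t).trans_lt ht
  have := gfac_aux hs ht
  unfold gfac
  positivity

lemma lip_bound {u h : E2 → ℝ} {K : NNReal} (hu : LipschitzWith K u) {c c' : E2} {s t H : ℝ}
    (hs : |s| < 1 + s) (ht : |t| < 1 + t) (hH : 0 ≤ H)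
    (hdef : ∀ x, h x = u x + s * u (fold c x) + t * u (fold c' x))
    (hh : ∀ x ∈ Metric.ball c 1, ∀ x' ∈ Metric.ball c 1, |h x - h x'| ≤ H * dist x x')
    (hh' : ∀ x ∈ Metric.ball c' 1, ∀ x' ∈ Metric.ball c' 1, |h x - h x'| ≤ H * dist x x') :
    ∀ x ∈ Metric.closedBall c 1, ∀ x' ∈ Metric.closedBall c 1,
      |u x - u x'| ≤ gfac s t * H * dist x x' := by
  have hs0 : 0 < 1 + s := (abs_nonneg s).trans_lt hs
  have ht0 : 0 < 1 + t := (abs_nonneg t).trans_lt ht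
  have hθ := gfac_aux hs ht
  have hg := gfac_nonneg hs ht
  set θ := |t| / (1 + t) * (|s| / (1 + s)) with hθdef
  have hθ0 : 0 ≤ θ := by positivity
  set A := gfac s t * H with hA
  have hA0 : 0 ≤ A := by positivity
  have hAeq : A * (1 - θ) = (H + |t| * (H / (1 + t))) / (1 + s) := by
    rw [hA, gfac, ← hθdef]
    field_simp
  have step : ∀ B, 0 ≤ B → (∀ x ∈ Metric.closedBall c 1, ∀ x' ∈ Metric.closedBall c 1,
      |u x - u x'| ≤ B * dist x x') → (∀ x ∈ Metric.closedBall c 1, ∀ x' ∈ Metric.closedBall c 1,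
      |u x - u x'| ≤ (A + θ * (B - A)) * dist x x') := by
    intro B hB h1
    have h2 := lip_step hu.continuous ht0 hB (h := h) (t := s) (H := H)
      (fun x => by rw [hdef x]; ring) hh' h1
    have h3 := lip_step hu.continuous hs0 (by positivity) hdef hh h2
    have e : (H + |t| * ((H + |s| * B) / (1 + t))) / (1 + s) = A + θ * (B - A) := by
      have e1 : A + θ * (B - A) = A * (1 - θ) + θ * B := by ring
      rw [e1, hAeq, hθdef]
      field_simp
      ring
    rw [e] at h3
    exact h3
  set D := max (K : ℝ) A - A with hD
  have hD0 : 0 ≤ D := by rw [hD]; linarith [le_max_right (K : ℝ) A]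
  have it : ∀ n : ℕ, ∀ x ∈ Metric.closedBall c 1, ∀ x' ∈ Metric.closedBall c 1,
      |u x - u x'| ≤ (A + θ ^ n * D) * dist x x' := by
    intro n
    induction n with
    | zero =>
      intro x _ x' _
      rw [pow_zero, one_mul, hD, add_sub_cancel]
      refine (hu.dist_le_mul x x').trans ?_
      exact mul_le_mul_of_nonneg_right (le_max_left _ _) dist_nonneg
    | succ n ih =>
      have := step _ (by positivity) ih
      have e : A + θ * (A + θ ^ n * D - A) = A + θ ^ (n + 1) * D := by ring
      rwa [e] at this
  intro x hx x' hx'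
  have hlim : Tendsto (fun n : ℕ => (A + θ ^ n * D) * dist x x') atTop (𝓝 ((A + 0 * D) * dist x x')) :=
    (((tendsto_pow_atTop_nhds_zero_of_lt_one hθ0 (by linarith)).mul_const D).const_add A).mul_const _
  have := ge_of_tendsto' hlim (fun n => it n x hx x' hx')
  simpa using this

/-- Theorem 1.1 (Li–Vogelius gradient estimate): there is a constant `C` depending only
on `Ω, μ, δ₀, κ⁺, κ⁻` such that any Lipschitz weak solution `u` of `div(a∇u)=0` with
boundary value `φ` satisfies `ess sup_{Ω^μ} |∇u| ≤ C ‖φ‖_{L^∞(∂Ω)}`. -/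
theorem stmt0 (Ω : Set (EuclideanSpace ℝ (Fin 2)))
    (hΩo : IsOpen Ω) (hΩb : Bornology.IsBounded Ω) (hΩs : SmoothBoundary Ω)
    (μ δ₀ κp κm : ℝ) (hμ : μ ∈ Ioo (0:ℝ) 1) (hδ₀ : 0 < δ₀)
    (hκp : 0 < κp) (hκm : 0 < κm) :
    ∃ C > 0, ∀ δ ∈ Ioo 0 δ₀,
      closure Bp ∪ closure (Bm δ) ⊆ innerReg Ω (2 * μ) →
      ∀ φ : EuclideanSpace ℝ (Fin 2) → ℝ, ContDiff ℝ (⊤ : ℕ∞) φ →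
      ∀ u : EuclideanSpace ℝ (Fin 2) → ℝ,
        (∃ K, LipschitzOnWith K u Ω) →
        ContinuousOn u (closure Ω) →
        EqOn u φ (frontier Ω) →
        (∀ ψ : EuclideanSpace ℝ (Fin 2) → ℝ, ContDiff ℝ (⊤ : ℕ∞) ψ → HasCompactSupport ψ →
          tsupport ψ ⊆ Ω →
          ∫ x in Ω, aFun δ κp κm x * ∑ i, pd i u x * pd i ψ x = 0) →
        ∀ᵐ x ∂volume, x ∈ innerReg Ω μ → ‖fderiv ℝ u x‖ ≤ C * bdryNorm Ω φ := by
  have := hδ₀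
  obtain ⟨hμ0, hμ1⟩ := hμ
  obtain ⟨c0, hc0, hinteg⟩ := interior_lip
  obtain ⟨s, hsdef⟩ : ∃ s : ℝ, s = (κp - 1) / 2 := ⟨_, rfl⟩
  obtain ⟨t, htdef⟩ : ∃ t : ℝ, t = (κm - 1) / 2 := ⟨_, rfl⟩
  have hs : |s| < 1 + s := by rw [abs_lt]; constructor <;> linarith
  have ht : |t| < 1 + t := by rw [abs_lt]; constructor <;> linarith
  have hg := gfac_nonneg hs ht
  have hg' := gfac_nonneg ht hs
  refine ⟨c0 * (1 + |s| + |t|) / (μ / 4) * (1 + |s| * gfac s t + |t| * gfac t s), by positivity, ?_⟩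
  intro δ hδ hsub φ hφ u ⟨K, huK⟩ huc hbd hweak
  -- global Lipschitz extension
  obtain ⟨v, hv, huv⟩ := huK.extend_real
  have huvc : EqOn u v (closure Ω) := huv.of_subset_closure huc hv.continuous.continuousOn
    subset_closure subset_rfl
  have hfd : ∀ x ∈ Ω, fderiv ℝ u x = fderiv ℝ v x := by
    intro x hx
    exact (Filter.eventuallyEq_of_mem (hΩo.mem_nhds hx) huv).fderiv_eq
  -- the coefficient
  have hBp : Metric.closedBall (0 : E2) 1 ⊆ innerReg Ω (2 * μ) := by
    rw [← closure_ball (0 : E2) one_ne_zero]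
    exact subset_union_left.trans hsub
  have hBm : Metric.closedBall (ctr δ) 1 ⊆ innerReg Ω (2 * μ) := by
    rw [← closure_ball (ctr δ) one_ne_zero]
    exact subset_union_right.trans hsub
  have hBpΩ : Metric.closedBall (0 : E2) 1 ⊆ Ω := fun x hx => (hBp hx).1
  have hBmΩ : Metric.closedBall (ctr δ) 1 ⊆ Ω := fun x hx => (hBm hx).1
  have hdisj : ∀ x ∈ Metric.ball (0 : E2) 1, x ∉ Metric.ball (ctr δ) 1 := by
    intro x hx hx'
    rw [Metric.mem_ball] at hx hx'
    have h1 : dist (0 : E2) (ctr δ) < 2 := by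
      have := dist_triangle_left (0 : E2) (ctr δ) x
      linarith
    have h2 : ‖(ctr δ) 1‖ ≤ ‖ctr δ‖ := PiLp.norm_apply_le _ _
    rw [dist_zero_left] at h1
    have h3 : (ctr δ) 1 = -2 - 2 * δ := by simp [ctr]
    rw [h3, Real.norm_eq_abs] at h2
    have h4 := neg_le_abs (-2 - 2 * δ)
    linarith [hδ.1]
  set a := aFun δ κp κm with hadef
  have hap : ∀ x ∈ Metric.ball (0 : E2) 1, a x = κp := fun x hx => if_pos hx
  have ham : ∀ x ∈ Metric.ball (ctr δ) 1, a x = κm := fun x hx =>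
    (if_neg (fun h => hdisj x h hx)).trans (if_pos hx)
  have hao : ∀ x, x ∉ Metric.ball (0 : E2) 1 → x ∉ Metric.ball (ctr δ) 1 → a x = 1 :=
    fun x h1 h2 => (if_neg h1).trans (if_neg h2)
  have haI : ∀ x, a x = 1 + (Metric.ball (0 : E2) 1).indicator (fun _ => κp - 1) x
      + (Metric.ball (ctr δ) 1).indicator (fun _ => κm - 1) x := by
    intro x
    by_cases h1 : x ∈ Metric.ball (0 : E2) 1
    · rw [hap x h1, indicator_of_mem h1, indicator_of_notMem (hdisj x h1)]; ring
    · by_cases h2 : x ∈ Metric.ball (ctr δ) 1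
      · rw [ham x h2, indicator_of_mem h2, indicator_of_notMem h1]; ring
      · rw [hao x h1 h2, indicator_of_notMem h1, indicator_of_notMem h2]; ring
  have hameas : Measurable a := by
    rw [show a = fun x => 1 + (Metric.ball (0 : E2) 1).indicator (fun _ => κp - 1) x
      + (Metric.ball (ctr δ) 1).indicator (fun _ => κm - 1) x from funext haI]
    exact (measurable_const.add (measurable_const.indicator measurableSet_ball)).add
      (measurable_const.indicator measurableSet_ball)
  have hacase : ∀ x, a x = κp ∨ a x = κm ∨ a x = 1 := by
    intro x
    by_cases h1 : x ∈ Metric.ball (0 : E2) 1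
    · exact Or.inl (hap x h1)
    · by_cases h2 : x ∈ Metric.ball (ctr δ) 1
      · exact Or.inr (Or.inl (ham x h2))
      · exact Or.inr (Or.inr (hao x h1 h2))
  have hapos : ∀ x, 0 < a x := by
    intro x
    rcases hacase x with h | h | h <;> rw [h]
    · exact hκp
    · exact hκm
    · exact one_pos
  have habd : ∀ x, |a x| ≤ κp + κm + 1 := by
    intro x
    rw [abs_of_pos (hapos x)]
    rcases hacase x with h | h | h <;> rw [h] <;> linarith
  -- the weak equation for Lipschitz test functions
  have hw0 : ∀ ψ : E2 → ℝ, ContDiff ℝ (⊤ : ℕ∞) ψ → HasCompactSupport ψ → tsupport ψ ⊆ Ω →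
      ∫ x in Ω, a x * br (fderiv ℝ v x) (fderiv ℝ ψ x) = 0 := by
    intro ψ h1 h2 h3
    rw [← hweak ψ h1 h2 h3]
    apply setIntegral_congr_fun hΩo.measurableSet
    intro x hx
    simp only [br, pd, hfd x hx]
  have hw : ∀ (θ : E2 → ℝ) (C : NNReal), LipschitzWith C θ → HasCompactSupport θ → tsupport θ ⊆ Ω →
      ∫ x, a x * br (fderiv ℝ v x) (fderiv ℝ θ x) = 0 := fun θ C h1 h2 h3 =>
    weak_lip hΩo hΩb hameas habd hv hw0 h1 h2 h3
  -- maximum principle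
  set M := bdryNorm Ω φ with hMdef
  have hcomp : IsCompact (frontier Ω) :=
    Metric.isCompact_of_isClosed_isBounded isClosed_frontier
      (hΩb.closure.subset frontier_subset_closure)
  have hM0 : 0 ≤ M := by
    apply Real.sSup_nonneg
    rintro _ ⟨y, _, rfl⟩
    exact abs_nonneg _
  have hφM : ∀ x ∈ frontier Ω, |v x| ≤ M := by
    intro x hx
    rw [← huvc (frontier_subset_closure hx), hbd hx]
    exact le_csSup (hcomp.image hφ.continuous.abs).bddAbove ⟨x, hx, rfl⟩
  have hvM : ∀ x ∈ Ω, |v x| ≤ M := by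
    intro x hx
    have h1 := max_principle hΩo hΩb hameas habd hapos hv hw
      (fun x hx => (le_abs_self _).trans (hφM x hx)) x hx
    have h2 := max_principle hΩo hΩb hameas habd hapos (u := fun y => -v y) hv.neg
      (fun θ C a1 a2 a3 => by
        have h := hw θ C a1 a2 a3
        have e : ∀ x, a x * br (fderiv ℝ (fun y => -v y) x) (fderiv ℝ θ x) =
            -(a x * br (fderiv ℝ v x) (fderiv ℝ θ x)) := by
          intro x
          rw [fderiv_fun_neg, ← neg_one_smul ℝ (fderiv ℝ v x), br_smul_left]
          ring
        simp only [e]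
        rw [integral_neg, h, neg_zero])
      (fun x hx => (neg_le_abs _).trans (hφM x hx)) x hx
    rw [abs_le]
    constructor <;> linarith
  -- the harmonic function
  obtain ⟨h, hdef⟩ : ∃ h : E2 → ℝ, h = fun y => v y + s * v (fold 0 y) + t * v (fold (ctr δ) y) := ⟨_, rfl⟩
  have hdef' : ∀ x, h x = v x + s * v (fold 0 x) + t * v (fold (ctr δ) x) := fun x => by rw [hdef]
  have hharm : ∀ (θ : E2 → ℝ) (C : NNReal), LipschitzWith C θ → HasCompactSupport θ → tsupport θ ⊆ Ω →
      ∫ x, br (fderiv ℝ h x) (fderiv ℝ θ x) = 0 := by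
    rw [hdef, hsdef, htdef]
    exact harm_of_weak hκp.ne' hκm.ne' hv hap ham haI hw hBpΩ hBmΩ
  have hlip : ∃ K', LipschitzWith K' h := by
    rw [hdef]
    exact ⟨_, (hv.add ((lipschitzWith_smul s).comp (hv.comp (fold_lip 0)))).add
      ((lipschitzWith_smul t).comp (hv.comp (fold_lip (ctr δ))))⟩
  obtain ⟨K', hK'⟩ := hlip
  have hhM : ∀ y ∈ Ω, |h y| ≤ (1 + |s| + |t|) * M := by
    intro y hy
    rw [hdef']
    have h1 := hvM y hy
    have h2 := mul_le_mul_of_nonneg_left (hvM _ (hBpΩ (fold_mem 0 y))) (abs_nonneg s)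
    have h3 := mul_le_mul_of_nonneg_left (hvM _ (hBmΩ (fold_mem (ctr δ) y))) (abs_nonneg t)
    rw [← abs_mul] at h2 h3
    have h4 := abs_add_three (v y) (s * v (fold 0 y)) (t * v (fold (ctr δ) y))
    linarith
  obtain ⟨H, hHdef⟩ : ∃ H : ℝ, H = c0 * ((1 + |s| + |t|) * M) / (μ / 4) := ⟨_, rfl⟩
  have hH0 : 0 ≤ H := by rw [hHdef]; positivity
  have hhL : ∀ x x', Metric.closedBall x (μ / 4) ⊆ Ω → Metric.closedBall x' (μ / 4) ⊆ Ω →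
      |h x - h x'| ≤ H * dist x x' := by
    rw [hHdef]
    exact hinteg Ω h K' _ (μ / 4) (by positivity) hK' hhM hharm
  have hhp : ∀ x ∈ Metric.ball (0 : E2) 1, ∀ x' ∈ Metric.ball (0 : E2) 1, |h x - h x'| ≤ H * dist x x' :=
    fun x hx x' hx' => hhL x x'
      (innerReg_ball (hBp (Metric.ball_subset_closedBall hx)) (by positivity) (by linarith))
      (innerReg_ball (hBp (Metric.ball_subset_closedBall hx')) (by positivity) (by linarith))
  have hhm : ∀ x ∈ Metric.ball (ctr δ) 1, ∀ x' ∈ Metric.ball (ctr δ) 1, |h x - h x'| ≤ H * dist x x' :=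
    fun x hx x' hx' => hhL x x'
      (innerReg_ball (hBm (Metric.ball_subset_closedBall hx)) (by positivity) (by linarith))
      (innerReg_ball (hBm (Metric.ball_subset_closedBall hx')) (by positivity) (by linarith))
  have hvp := lip_bound hv hs ht hH0 hdef' hhp hhm
  have hvm := lip_bound hv ht hs hH0 (fun x => by rw [hdef']; ring) hhm hhp
  -- conclusion
  refine ae_of_all _ fun x hx => ?_
  have hxΩ : x ∈ Ω := hx.1
  rw [hfd x hxΩ]
  have hC : c0 * (1 + |s| + |t|) / (μ / 4) * (1 + |s| * gfac s t + |t| * gfac t s) * M =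
      H * (1 + |s| * gfac s t + |t| * gfac t s) := by
    rw [hHdef]; ring
  rw [hC]
  apply norm_fderiv_le_of_lip' ℝ (by positivity)
  filter_upwards [Metric.ball_mem_nhds x (show 0 < μ / 4 by positivity)] with y hy
  have h1 := hhL y x (fun z hz => innerReg_ball hx (r := μ / 2) (by positivity) (by linarith) (by
      rw [Metric.mem_closedBall] at hz ⊢
      rw [Metric.mem_ball] at hy
      linarith [dist_triangle z y x]))
    (innerReg_ball hx (by positivity) (by linarith))
  have h2 := hvp _ (fold_mem 0 y) _ (fold_mem 0 x)
  have h3 := hvm _ (fold_mem (ctr δ) y) _ (fold_mem (ctr δ) x)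
  have h2' : dist (fold 0 y) (fold 0 x) ≤ dist y x := by simpa using (fold_lip 0).dist_le_mul y x
  have h3' : dist (fold (ctr δ) y) (fold (ctr δ) x) ≤ dist y x := by
    simpa using (fold_lip (ctr δ)).dist_le_mul y x
  have h4 : |s * (v (fold 0 y) - v (fold 0 x))| ≤ |s| * (gfac s t * H * dist y x) := by
    rw [abs_mul]
    exact mul_le_mul_of_nonneg_left (h2.trans (mul_le_mul_of_nonneg_left h2' (by positivity))) (abs_nonneg _)
  have h5 : |t * (v (fold (ctr δ) y) - v (fold (ctr δ) x))| ≤ |t| * (gfac t s * H * dist y x) := by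
    rw [abs_mul]
    exact mul_le_mul_of_nonneg_left (h3.trans (mul_le_mul_of_nonneg_left h3' (by positivity))) (abs_nonneg _)
  have e : v y - v x = (h y - h x) - s * (v (fold 0 y) - v (fold 0 x))
      - t * (v (fold (ctr δ) y) - v (fold (ctr δ) x)) := by
    rw [hdef', hdef']; ring
  rw [Real.norm_eq_abs, e, ← dist_eq_norm]
  refine (abs_sub _ _).trans ?_
  have h6 := abs_sub (h y - h x) (s * (v (fold 0 y) - v (fold 0 x)))
  linarith
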